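/- arXiv:2503.14373 — 4 statements merged into one kernel-verified Lean document; each statement's English description precedes it below -/
import Mathlib

section
/- Let n be a positive integer. Then 4·δ(n) < n if and only if both of the following hold: (a) n is not of the form p, 2p, 3p or 4p for any prime p; and (b) n is not one of the 27 numbers 1, 16, 18, 24, 25, 27, 30, 32, 35, 36, 40, 42, 45, 48, 49, 50, 54, 55, 56, 60, 63, 64, 65, 66, 75, 85, 95. Moreover, 4·δ(n) = n if and only if n = 64. -/
/-- `staircaseDelta n` is the minimum of `r + s` over all pairs of positive
integers `(r, s)` with `r ≤ s` and `r * s = n`. -/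
noncomputable def staircaseDelta (n : ℕ) : ℕ :=
  sInf {w : ℕ | ∃ r s : ℕ, 0 < r ∧ r ≤ s ∧ r * s = n ∧ w = r + s}

/-!
If `n = r * s` and `k * (r + s) ≤ n`, then both factors exceed `k`, so `k * p < n` for each prime
`p ∣ n`. Conversely, if `k * p < n` for each prime `p ∣ n`, then `n > k ^ 3` is a product of two
factors exceeding `k`: the least divisor of `n` above `k` is prime or a product of two numbers at
most `k`, so its cofactor exceeds `k`. For such factors the inequality `k * (r + s) < n`, that is
`k ^ 2 < (r - k) * (s - k)`, can fail only if `n ≤ k * (k + 1) ^ 2`. For `k = 4` this leaves the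
`n ≤ 100` to inspect.
-/

section Factorization

variable {k n : ℕ}

theorem exists_dvd_lt_and_prime_or_le_sq (hk : 0 < k) (hkn : k < n) :
    ∃ d, d ∣ n ∧ k < d ∧ (d.Prime ∨ d ≤ k ^ 2) := by
  have hex : ∃ d, d ∣ n ∧ k < d := ⟨n, dvd_rfl, hkn⟩
  obtain ⟨hdn, hkd⟩ := Nat.find_spec hex
  have le_of_dvd_of_lt {a : ℕ} (had : a ∣ Nat.find hex) (hlt : a < Nat.find hex) : a ≤ k :=
    not_lt.mp fun hka => Nat.find_min hex hlt ⟨had.trans hdn, hka⟩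
  refine ⟨Nat.find hex, hdn, hkd, or_iff_not_imp_left.mpr fun hprime => ?_⟩
  obtain ⟨a, b, ha, hb, hab⟩ := (Nat.not_prime_iff_exists_mul_eq (by lia)).mp hprime
  calc Nat.find hex = a * b := hab.symm
    _ ≤ k * k := Nat.mul_le_mul (le_of_dvd_of_lt (Dvd.intro b hab) ha)
        (le_of_dvd_of_lt (Dvd.intro_left a hab) hb)
    _ = k ^ 2 := (sq k).symm

theorem exists_lt_and_lt_and_mul_eq (hk : 0 < k) (hn : k ^ 3 < n)
    (hprime : ∀ p ∈ n.primeFactors, k * p < n) : ∃ a b, k < a ∧ k < b ∧ a * b = n := by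
  have hkn : k < n := (Nat.le_self_pow three_ne_zero k).trans_lt hn
  obtain ⟨d, hdn, hkd, hd⟩ := exists_dvd_lt_and_prime_or_le_sq hk hkn
  have hkdn : k * d < n := by
    rcases hd with hd | hd
    · exact hprime d (hd.mem_primeFactors hdn (by lia))
    · calc k * d ≤ k * k ^ 2 := Nat.mul_le_mul_left k hd
        _ = k ^ 3 := by ring
        _ < n := hn
  obtain ⟨b, rfl⟩ := hdn
  exact ⟨d, b, hkd, lt_of_mul_lt_mul_right (by rwa [mul_comm d b] at hkdn) d.zero_le, rfl⟩

theorem lt_and_lt_of_mul_add_le_mul {r s : ℕ} (hpos : 0 < r * s) (h : k * (r + s) ≤ r * s) :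
    k < r ∧ k < s := by
  have hr : 0 < r := pos_of_mul_pos_left hpos s.zero_le
  have hs : 0 < s := pos_of_mul_pos_right hpos r.zero_le
  constructor
  · by_contra! hrk
    nlinarith
  · by_contra! hsk
    nlinarith

theorem mul_add_lt_mul_of_mul_sq_lt_mul {a b : ℕ} (ha : k < a) (hb : k < b)
    (h : k * (k + 1) ^ 2 < a * b) : k * (a + b) < a * b := by
  obtain ⟨x, rfl⟩ := Nat.exists_eq_add_of_lt ha
  obtain ⟨y, rfl⟩ := Nat.exists_eq_add_of_lt hb
  suffices k ^ 2 < (x + 1) * (y + 1) by nlinarith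
  by_contra! hle
  have hadd : x + y + 1 ≤ k ^ 2 := by nlinarith
  have hexpand : (k + x + 1) * (k + y + 1) ≤ k * (k + 1) ^ 2 :=
    calc (k + x + 1) * (k + y + 1) = k ^ 2 + k * ((x + y + 1) + 1) + (x + 1) * (y + 1) := by ring
      _ ≤ k ^ 2 + k * (k ^ 2 + 1) + k ^ 2 := by gcongr
      _ = k * (k + 1) ^ 2 := by ring
  exact hexpand.not_gt h

theorem forall_mem_primeFactors_mul_lt_iff (hn : n ≠ 0) :
    (∀ p ∈ n.primeFactors, k * p < n) ↔ ∀ p : ℕ, p.Prime → ∀ c ≤ k, n ≠ c * p := by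
  constructor
  · rintro h p hp c hc rfl
    exact (h p (hp.mem_primeFactors (dvd_mul_left p c) hn)).not_ge (Nat.mul_le_mul_right p hc)
  · intro h p hp
    obtain ⟨hprime, ⟨c, rfl⟩, -⟩ := Nat.mem_primeFactors.mp hp
    have hkc : k < c := not_le.mp fun hck => h p hprime c hck (mul_comm p c)
    rw [mul_comm p c]
    exact Nat.mul_lt_mul_of_pos_right hkc hprime.pos

end Factorization

section StaircaseDelta

variable {k n : ℕ}

theorem staircaseDelta_mul_le_add {r s : ℕ} (hr : 0 < r) (hs : 0 < s) :
    staircaseDelta (r * s) ≤ r + s := by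
  rcases le_total r s with hle | hle
  · exact Nat.sInf_le ⟨r, s, hr, hle, rfl, rfl⟩
  · exact Nat.sInf_le ⟨s, r, hs, hle, mul_comm s r, add_comm r s⟩

theorem exists_mul_eq_and_staircaseDelta_eq_add (hn : 0 < n) :
    ∃ r s, r * s = n ∧ staircaseDelta n = r + s := by
  obtain ⟨r, s, -, -, hrs, hadd⟩ : staircaseDelta n ∈
      {w : ℕ | ∃ r s : ℕ, 0 < r ∧ r ≤ s ∧ r * s = n ∧ w = r + s} :=
    Nat.sInf_mem ⟨1 + n, 1, n, one_pos, hn, one_mul n, rfl⟩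
  exact ⟨r, s, hrs, hadd⟩

theorem mul_staircaseDelta_lt_iff_exists {m : ℕ} (hn : 0 < n) :
    k * staircaseDelta n < m ↔ ∃ x ∈ n.divisorsAntidiagonal, k * (x.1 + x.2) < m := by
  constructor
  · intro h
    obtain ⟨r, s, hrs, hadd⟩ := exists_mul_eq_and_staircaseDelta_eq_add hn
    exact ⟨(r, s), Nat.mem_divisorsAntidiagonal.mpr ⟨hrs, hn.ne'⟩, hadd ▸ h⟩
  · rintro ⟨⟨r, s⟩, hx, h⟩
    obtain ⟨rfl, -⟩ := Nat.mem_divisorsAntidiagonal.mp hx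
    have hle : staircaseDelta (r * s) ≤ r + s :=
      staircaseDelta_mul_le_add (pos_of_mul_pos_left hn s.zero_le)
        (pos_of_mul_pos_right hn r.zero_le)
    exact (Nat.mul_le_mul_left k hle).trans_lt h

theorem mul_lt_of_mul_staircaseDelta_le (h : k * staircaseDelta n ≤ n) {p : ℕ}
    (hp : p ∈ n.primeFactors) : k * p < n := by
  have hn : 0 < n := Nat.pos_of_ne_zero (Nat.mem_primeFactors.mp hp).2.2
  obtain ⟨r, s, rfl, hadd⟩ := exists_mul_eq_and_staircaseDelta_eq_add hn
  rw [hadd] at h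
  obtain ⟨hr, hs⟩ := lt_and_lt_of_mul_add_le_mul hn h
  obtain ⟨hp, hdvd, -⟩ := Nat.mem_primeFactors.mp hp
  have hr0 : 0 < r := Nat.zero_lt_of_lt hr
  have hs0 : 0 < s := Nat.zero_lt_of_lt hs
  rcases hp.dvd_mul.mp hdvd with hpr | hps
  · calc k * p ≤ k * r := Nat.mul_le_mul_left k (Nat.le_of_dvd hr0 hpr)
      _ < s * r := Nat.mul_lt_mul_of_pos_right hs hr0
      _ = r * s := mul_comm s r
  · calc k * p ≤ k * s := Nat.mul_le_mul_left k (Nat.le_of_dvd hs0 hps)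
      _ < r * s := Nat.mul_lt_mul_of_pos_right hr hs0

theorem mul_staircaseDelta_lt_iff_forall_primeFactors (hk : 0 < k) (hn : k * (k + 1) ^ 2 < n) :
    k * staircaseDelta n < n ↔ ∀ p ∈ n.primeFactors, k * p < n := by
  refine ⟨fun h p => mul_lt_of_mul_staircaseDelta_le h.le, fun h => ?_⟩
  have hk3 : k ^ 3 < n := by nlinarith
  obtain ⟨a, b, ha, hb, rfl⟩ := exists_lt_and_lt_and_mul_eq hk hk3 h
  calc k * staircaseDelta (a * b) ≤ k * (a + b) :=
        Nat.mul_le_mul_left k (staircaseDelta_mul_le_add (by lia) (by lia))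
    _ < a * b := mul_add_lt_mul_of_mul_sq_lt_mul ha hb hn

theorem mul_staircaseDelta_ne (hn : k * (k + 1) ^ 2 < n) : k * staircaseDelta n ≠ n := by
  intro h
  have hpos : 0 < n := Nat.zero_lt_of_lt hn
  obtain ⟨r, s, rfl, hadd⟩ := exists_mul_eq_and_staircaseDelta_eq_add hpos
  rw [hadd] at h
  obtain ⟨hr, hs⟩ := lt_and_lt_of_mul_add_le_mul hpos h.le
  exact (mul_add_lt_mul_of_mul_sq_lt_mul hr hs hn).ne h

theorem four_mul_staircaseDelta_lt_iff_of_mem_Icc (hn : n ∈ Finset.Icc 1 100) :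
    4 * staircaseDelta n < n ↔ (∀ p ∈ n.primeFactors, 4 * p < n) ∧
      n ∉ ({1, 16, 18, 24, 25, 27, 30, 32, 35, 36, 40, 42, 45, 48, 49, 50, 54, 55, 56,
            60, 63, 64, 65, 66, 75, 85, 95} : Set ℕ) := by
  rw [mul_staircaseDelta_lt_iff_exists (Finset.mem_Icc.mp hn).1]
  revert n hn
  decide +kernel

theorem four_mul_staircaseDelta_eq_iff_of_mem_Icc (hn : n ∈ Finset.Icc 1 100) :
    4 * staircaseDelta n = n ↔ n = 64 := by
  have hpos : 0 < n := (Finset.mem_Icc.mp hn).1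
  have heq : 4 * staircaseDelta n = n ↔
      4 * staircaseDelta n < n + 1 ∧ ¬ 4 * staircaseDelta n < n := by lia
  rw [heq, mul_staircaseDelta_lt_iff_exists hpos, mul_staircaseDelta_lt_iff_exists hpos]
  clear heq hpos
  revert n hn
  decide +kernel

end StaircaseDelta

/-- For a positive integer `n`, `4·δ(n) < n` iff (a) `n ≠ p, 2p, 3p, 4p` for every
prime `p`, and (b) `n` is not one of 27 exceptional numbers; moreover
`4·δ(n) = n` iff `n = 64`. -/
theorem stmt6 (n : ℕ) (hn : 0 < n) :
    (4 * staircaseDelta n < n ↔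
      (∀ p : ℕ, Nat.Prime p → n ≠ p ∧ n ≠ 2 * p ∧ n ≠ 3 * p ∧ n ≠ 4 * p) ∧
      n ∉ ({1, 16, 18, 24, 25, 27, 30, 32, 35, 36, 40, 42, 45, 48, 49, 50, 54, 55, 56,
            60, 63, 64, 65, 66, 75, 85, 95} : Set ℕ)) ∧
    (4 * staircaseDelta n = n ↔ n = 64) := by
  have hprime : (∀ p : ℕ, Nat.Prime p → n ≠ p ∧ n ≠ 2 * p ∧ n ≠ 3 * p ∧ n ≠ 4 * p) ↔
      ∀ p ∈ n.primeFactors, 4 * p < n := by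
    rw [forall_mem_primeFactors_mul_lt_iff hn.ne']
    refine forall₂_congr fun p _ => ⟨fun h c hc => ?_, fun h => ?_⟩
    · interval_cases c <;> lia
    · exact ⟨by simpa using h 1 (by lia), h 2 (by lia), h 3 (by lia), h 4 le_rfl⟩
  rw [hprime]
  rcases le_or_gt n 100 with hsmall | hlarge
  · have hmem : n ∈ Finset.Icc 1 100 := Finset.mem_Icc.mpr ⟨hn, hsmall⟩
    exact ⟨four_mul_staircaseDelta_lt_iff_of_mem_Icc hmem,
      four_mul_staircaseDelta_eq_iff_of_mem_Icc hmem⟩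
  · refine ⟨?_, iff_of_false (mul_staircaseDelta_ne hlarge) (by lia)⟩
    rw [mul_staircaseDelta_lt_iff_forall_primeFactors four_pos hlarge, iff_self_and]
    rintro - hmem
    simp only [Set.mem_insert_iff, Set.mem_singleton_iff] at hmem
    omega
end

section
/- Let k and n be positive integers with k² − k + 1 ≤ n ≤ k², and let t, r₁, …, r_t, s₁, …, s_t be positive integers such that n = r₁s₁ + r₂s₂ + ⋯ + r_t s_t and r₁ > r₂ > ⋯ > r_t (the latter condition being vacuous when t = 1). Then r₁ + s₁ + s₂ + ⋯ + s_t ≥ 2k. -/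
/-!
Bounding every `rᵢ` by `a := r₁` gives `n ≤ a * b` with `b := s₁ + ⋯ + s_t`. If `a + b ≤ 2k - 1`,
then `4ab ≤ (a + b)² ≤ (2k - 1)² = 4k(k - 1) + 1`, so `n ≤ ab ≤ k(k - 1)` by integrality, which
contradicts the lower bound on `n`.
-/

theorem sum_mul_le_mul_sum_of_forall_le {ι R : Type*} [NonUnitalNonAssocSemiring R]
    [PartialOrder R] [IsOrderedAddMonoid R] [MulPosMono R] {u : Finset ι} {r s : ι → R} {a : R}
    (hr : ∀ i ∈ u, r i ≤ a) (hs : ∀ i ∈ u, 0 ≤ s i) :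
    ∑ i ∈ u, r i * s i ≤ a * ∑ i ∈ u, s i := by
  rw [Finset.mul_sum]
  exact Finset.sum_le_sum fun i hi ↦ mul_le_mul_of_nonneg_right (hr i hi) (hs i hi)

theorem two_mul_le_add_of_mul_sub_one_lt_mul {k a b : ℕ} (h : k * (k - 1) < a * b) :
    2 * k ≤ a + b := by
  obtain _ | m := k
  · simp
  by_contra! hlt
  have h_amgm : 4 * (a * b) ≤ 4 * ((m + 1) * m) + 1 :=
    calc 4 * (a * b) = 4 * a * b := (mul_assoc 4 a b).symm
      _ ≤ (a + b) ^ 2 := four_mul_le_sq_add a b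
      _ ≤ (2 * m + 1) ^ 2 := Nat.pow_le_pow_left (Nat.le_of_lt_succ hlt) 2
      _ = 4 * ((m + 1) * m) + 1 := by ring
  rw [Nat.add_sub_cancel] at h
  omega

theorem stmt15_general {ι : Type*} {u : Finset ι} {r s : ι → ℕ} {k a : ℕ}
    (hr : ∀ i ∈ u, r i ≤ a) (hk : k ^ 2 - k + 1 ≤ ∑ i ∈ u, r i * s i) :
    2 * k ≤ a + ∑ i ∈ u, s i := by
  apply two_mul_le_add_of_mul_sub_one_lt_mul
  calc k * (k - 1) = k ^ 2 - k := by rw [Nat.mul_sub_one, sq]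
    _ < ∑ i ∈ u, r i * s i := hk
    _ ≤ a * ∑ i ∈ u, s i := sum_mul_le_mul_sum_of_forall_le hr fun _ _ ↦ Nat.zero_le _

/-- Let `k, n` be positive integers with `k^2 - k + 1 ≤ n ≤ k^2`, and let
`n = r₁s₁ + ⋯ + r_t s_t` with `t ≥ 1`, all `rᵢ, sᵢ` positive and
`r₁ > r₂ > ⋯ > r_t`. Then `r₁ + s₁ + ⋯ + s_t ≥ 2k`. -/
theorem stmt15 (k n : ℕ) (hk : 0 < k) (h1 : k ^ 2 - k + 1 ≤ n) (h2 : n ≤ k ^ 2)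
    (t : ℕ) (ht : 0 < t) (r s : Fin t → ℕ)
    (hr : ∀ i, 0 < r i) (hs : ∀ i, 0 < s i) (hanti : StrictAnti r)
    (hsum : n = ∑ i, r i * s i) :
    2 * k ≤ r ⟨0, ht⟩ + ∑ i, s i :=
  stmt15_general (fun i _ ↦ hanti.antitone (Fin.mk_le_of_le_val i.val.zero_le)) (hsum ▸ h1)
end

section
/- Let k be a positive integer and suppose k² = r₁s₁ + r₂s₂ + ⋯ + r_t s_t where t ≥ 2 and r₁, …, r_t, s₁, …, s_t are positive integers with r₁ > r₂ > ⋯ > r_t. Then r₁ + s₁ + s₂ + ⋯ + s_t ≥ 2k + 1. Moreover, if t = 1 and r₁ + s₁ = 2k with r₁s₁ = k², then r₁ = s₁ = k. -/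
/-!
Write `S` for the sum of the `sᵢ`. Replacing every `rᵢ` by the largest one, `r₁`, strictly increases
the sum `∑ rᵢsᵢ`, because `r₂ < r₁` and `s₂ > 0`; hence `k² < r₁S`. By the inequality of arithmetic
and geometric means, `(2k)² < 4r₁S ≤ (r₁ + S)²`. If `t = 1` and `4r₁s₁ = (r₁ + s₁)²`, this is the
equality case, which forces `r₁ = s₁`.
-/

theorem sum_mul_lt_mul_sum {ι R : Type*} [Semiring R] [PartialOrder R] [IsStrictOrderedRing R]
    {t : Finset ι} {r s : ι → R} {a : R}
    (hr : ∀ i ∈ t, r i ≤ a) (hs : ∀ i ∈ t, 0 ≤ s i) (hlt : ∃ i ∈ t, r i < a ∧ 0 < s i) :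
    ∑ i ∈ t, r i * s i < a * ∑ i ∈ t, s i := by
  rw [Finset.mul_sum]
  obtain ⟨j, hj, hra, hsj⟩ := hlt
  exact Finset.sum_lt_sum (fun i hi ↦ mul_le_mul_of_nonneg_right (hr i hi) (hs i hi))
    ⟨j, hj, mul_lt_mul_of_pos_right hra hsj⟩

section

variable {R : Type*} [CommSemiring R] [LinearOrder R] [IsStrictOrderedRing R]
  [ExistsAddOfLE R]

theorem two_mul_lt_add_of_sq_lt_mul {k a b : R} (hb : 0 ≤ b) (h : k ^ 2 < a * b) :
    2 * k < a + b := by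
  have ha : 0 < a := pos_of_mul_pos_left ((sq_nonneg k).trans_lt h) hb
  refine lt_of_pow_lt_pow_left₀ 2 (add_nonneg ha.le hb) ?_
  calc (2 * k) ^ 2 = 4 * k ^ 2 := by ring
    _ < 4 * (a * b) := mul_lt_mul_of_pos_left h four_pos
    _ = 4 * a * b := (mul_assoc 4 a b).symm
    _ ≤ (a + b) ^ 2 := four_mul_le_sq_add a b

theorem eq_of_four_mul_eq_add_sq {a b : R} (h : 4 * (a * b) = (a + b) ^ 2) : a = b := by
  wlog hab : a ≤ b generalizing a b
  · exact (this (by rwa [mul_comm b, add_comm b]) (le_of_not_ge hab)).symm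
  obtain ⟨c, rfl⟩ := exists_add_of_le hab
  have hc : c ^ 2 = 0 := by
    refine add_left_cancel (a := 4 * (a * (a + c))) ?_
    calc 4 * (a * (a + c)) + c ^ 2 = (a + (a + c)) ^ 2 := by ring
      _ = 4 * (a * (a + c)) + 0 := by rw [← h, add_zero]
  rw [eq_zero_of_pow_eq_zero hc, add_zero]

theorem eq_and_eq_of_mul_eq_sq_of_add_eq_two_mul {k a b : R} (hmul : a * b = k ^ 2)
    (hadd : a + b = 2 * k) : a = k ∧ b = k := by
  obtain rfl : a = b := eq_of_four_mul_eq_add_sq <| by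
    rw [hmul, hadd]
    ring
  have hak : a = k := mul_left_cancel₀ two_ne_zero ((two_mul a).trans hadd)
  exact ⟨hak, hak⟩

theorem stmt17_general (k : R) :
    (∀ {ι : Type*} (t : Finset ι) (r s : ι → R) (a : R),
      (∀ i ∈ t, r i ≤ a) → (∀ i ∈ t, 0 ≤ s i) → (∃ i ∈ t, r i < a ∧ 0 < s i) →
      k ^ 2 ≤ ∑ i ∈ t, r i * s i →
      2 * k < a + ∑ i ∈ t, s i) ∧
    (∀ a b : R, a * b = k ^ 2 → a + b = 2 * k → a = k ∧ b = k) :=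
  ⟨fun _ _ _ _ hr hs hlt hk ↦ two_mul_lt_add_of_sq_lt_mul (Finset.sum_nonneg hs)
      (hk.trans_lt (sum_mul_lt_mul_sum hr hs hlt)),
    fun _ _ ↦ eq_and_eq_of_mul_eq_sq_of_add_eq_two_mul⟩

end

/-- Let `k` be a positive integer. If `k^2 = r₁s₁ + ⋯ + r_t s_t` with `t ≥ 2`,
all `rᵢ, sᵢ` positive and `r₁ > r₂ > ⋯ > r_t`, then
`r₁ + s₁ + ⋯ + s_t ≥ 2k + 1`. Moreover, if `t = 1` and `r₁ s₁ = k^2` with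
`r₁ + s₁ = 2k` (`r₁, s₁` positive), then `r₁ = s₁ = k`. -/
theorem stmt17 (k : ℕ) (hk : 0 < k) :
    (∀ (t : ℕ) (ht : 2 ≤ t) (r s : Fin t → ℕ),
      (∀ i, 0 < r i) → (∀ i, 0 < s i) → StrictAnti r →
      k ^ 2 = ∑ i, r i * s i →
      2 * k + 1 ≤ r ⟨0, Nat.lt_of_lt_of_le Nat.zero_lt_two ht⟩ + ∑ i, s i) ∧
    (∀ r₁ s₁ : ℕ, 0 < r₁ → 0 < s₁ → r₁ * s₁ = k ^ 2 → r₁ + s₁ = 2 * k →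
      r₁ = k ∧ s₁ = k) :=
  (stmt17_general k).imp
    (fun h _ ht r s _ hs hr hsum ↦ h .univ r s _ (fun _ _ ↦ hr.antitone (Nat.zero_le _))
      (fun i _ ↦ (hs i).le) ⟨⟨1, ht⟩, Finset.mem_univ _, hr Nat.zero_lt_one, hs _⟩ hsum.le)
    fun h r₁ s₁ _ _ ↦ h r₁ s₁
end

section
/- Let n be a positive integer and let φ(n) denote the minimum weight over all staircase representations of n. Then there is a unique positive integer k with k² − k + 1 ≤ n ≤ k² + k, and for this k: if n ≤ k² then φ(n) = 2k (i.e., every staircase representation of n has weight at least 2k and some staircase representation of n has weight exactly 2k), while if n ≥ k² + 1 then φ(n) = 2k + 1 (i.e., every staircase representation of n has weight at least 2k + 1 and some staircase representation of n has weight exactly 2k + 1). -/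
/-- `IsStaircaseWeight n w` says that `w` is the weight `r₁ + s₁ + ⋯ + s_t` of some
staircase representation `n = r₁s₁ + ⋯ + r_t s_t` with `t ≥ 1`, all `rᵢ, sᵢ`
positive integers and `r₁ > r₂ > ⋯ > r_t`. -/
def IsStaircaseWeight (n w : ℕ) : Prop :=
  ∃ (t : ℕ) (ht : 0 < t) (r s : Fin t → ℕ),
    (∀ i, 0 < r i) ∧ (∀ i, 0 < s i) ∧ StrictAnti r ∧
    n = ∑ i, r i * s i ∧ w = r ⟨0, ht⟩ + ∑ i, s i

/-!
A staircase with longest row `a = r₁` and `b = ∑ sᵢ` rows fits in an `a × b` rectangle, so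
`4 n ≤ 4 a b ≤ (a + b) ^ 2`. Conversely, an almost square rectangle, possibly with one shorter row,
attains the least weight this inequality allows. So `φ(n) = ⌈2√n⌉`, that is, `φ(n) = v + 1`
exactly when `v ^ 2 < 4 n ≤ (v + 1) ^ 2`.
-/

namespace IsStaircaseWeight

theorem exists_le_mul {n w : ℕ} (h : IsStaircaseWeight n w) : ∃ a b, n ≤ a * b ∧ w = a + b := by
  obtain ⟨t, ht, r, s, -, -, hanti, rfl, rfl⟩ := h
  refine ⟨r ⟨0, ht⟩, ∑ i, s i, ?_, rfl⟩
  have hle (i : Fin t) : r i ≤ r ⟨0, ht⟩ := hanti.antitone (Nat.zero_le i.val)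
  rw [Finset.mul_sum]
  gcongr with i
  exact hle i

theorem four_mul_le_sq {n w : ℕ} (h : IsStaircaseWeight n w) : 4 * n ≤ w ^ 2 := by
  obtain ⟨a, b, hn, rfl⟩ := h.exists_le_mul
  calc
    4 * n ≤ 4 * (a * b) := by gcongr
    _ = 4 * a * b := (mul_assoc 4 a b).symm
    _ ≤ (a + b) ^ 2 := four_mul_le_sq_add a b

end IsStaircaseWeight

theorem isStaircaseWeight_mul {a b : ℕ} (ha : 0 < a) (hb : 0 < b) :
    IsStaircaseWeight (a * b) (a + b) :=
  ⟨1, one_pos, fun _ => a, fun _ => b, fun _ => ha, fun _ => hb, Subsingleton.strictAnti _,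
    by simp, by simp⟩

theorem isStaircaseWeight_mul_add_mul {a b c d : ℕ} (hb : 0 < b) (hc : 0 < c) (hd : 0 < d)
    (hca : c < a) : IsStaircaseWeight (a * b + c * d) (a + (b + d)) :=
  ⟨2, two_pos, ![a, c], ![b, d], by simp [Fin.forall_fin_two, hc, hc.trans hca],
    by simp [Fin.forall_fin_two, hb, hd], by simpa using hca, by simp, by simp⟩

theorem isStaircaseWeight_of_mul_lt_of_le_mul_add_one {n a b : ℕ} (ha : a ≤ n) (hlt : a * b < n)
    (hle : n ≤ a * (b + 1)) : IsStaircaseWeight n (a + (b + 1)) := by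
  obtain rfl | hne := hle.eq_or_lt
  · exact isStaircaseWeight_mul (pos_of_mul_pos_left hlt.pos (Nat.zero_le _)) b.succ_pos
  · obtain ⟨m, rfl⟩ := Nat.exists_eq_add_of_lt hlt
    have hma : m + 1 < a := by linarith [mul_add_one a b]
    have hb : 0 < b := Nat.pos_of_ne_zero (by rintro rfl; omega)
    simpa [add_assoc] using isStaircaseWeight_mul_add_mul hb m.succ_pos one_pos hma

theorem isStaircaseWeight_add_one_of_sq_lt {n v : ℕ} (hlt : v ^ 2 < 4 * n)
    (hle : 4 * n ≤ (v + 1) ^ 2) : IsStaircaseWeight n (v + 1) := by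
  obtain ⟨j, rfl | rfl⟩ := v.even_or_odd'
  · have hjn : j * j < n := by linarith
    have hnj : n ≤ j * (j + 1) := by
      have : 4 * n ≤ 4 * (j * (j + 1)) + 1 := by linarith
      omega
    have h := isStaircaseWeight_of_mul_lt_of_le_mul_add_one (j.le_mul_self.trans hjn.le) hjn hnj
    rwa [← add_assoc, ← two_mul] at h
  · have hjn : (j + 1) * j < n := by
      have : 4 * ((j + 1) * j) + 1 < 4 * n := by linarith
      omega
    have hnj : n ≤ (j + 1) * (j + 1) := by linarith
    have hj : j + 1 ≤ n := (Nat.le_mul_of_pos_left j j.succ_pos).trans_lt hjn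
    have h := isStaircaseWeight_of_mul_lt_of_le_mul_add_one hj hjn hnj
    rwa [← two_mul, mul_add_one] at h

theorem isLeast_isStaircaseWeight {n v : ℕ} (hlt : v ^ 2 < 4 * n) (hle : 4 * n ≤ (v + 1) ^ 2) :
    IsLeast {w | IsStaircaseWeight n w} (v + 1) :=
  ⟨isStaircaseWeight_add_one_of_sq_lt hlt hle, fun _ hw =>
    Nat.succ_le_of_lt (lt_of_pow_lt_pow_left' 2 (hlt.trans_le hw.four_mul_le_sq))⟩

theorem existsUnique_lt_and_le_add_one {α : Type*} [LinearOrder α] {f : ℕ → α} (hf : Monotone f)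
    {x : α} (h₀ : f 0 < x) (hx : ∃ m, x ≤ f m) : ∃! j, f j < x ∧ x ≤ f (j + 1) := by
  obtain ⟨j, hj, hj'⟩ := Nat.exists_not_and_succ_of_not_zero_of_exists h₀.not_ge hx
  have le_of_lt_of_le {i k : ℕ} (hi : f i < x) (hk : x ≤ f (k + 1)) : i ≤ k :=
    Nat.lt_succ_iff.mp (hf.reflect_lt (hi.trans_le hk))
  exact ⟨j, ⟨not_le.mp hj, hj'⟩, fun i ⟨hi, hi'⟩ =>
    (le_of_lt_of_le hi hj').antisymm (le_of_lt_of_le (not_le.mp hj) hi')⟩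

theorem add_one_sq_sub_add_one (j : ℕ) : (j + 1) ^ 2 - (j + 1) = j ^ 2 + j :=
  Nat.sub_eq_of_eq_add (by ring)

theorem existsUnique_sq_sub_add_one_le_and_le_sq_add {n : ℕ} (hn : 0 < n) :
    ∃! k : ℕ, 0 < k ∧ k ^ 2 - k + 1 ≤ n ∧ n ≤ k ^ 2 + k := by
  have hmono : Monotone fun j : ℕ => j ^ 2 + j := fun i j hij => by dsimp only; gcongr
  obtain ⟨j, hj, huniq⟩ :=
    existsUnique_lt_and_le_add_one hmono (x := n) (by simpa using hn) ⟨n, Nat.le_add_left _ _⟩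
  refine ⟨j + 1, ⟨j.succ_pos, by rw [add_one_sq_sub_add_one]; exact hj.1, hj.2⟩, ?_⟩
  rintro (_ | i) ⟨hpos, hlo, hhi⟩
  · exact absurd hpos (lt_irrefl 0)
  · rw [add_one_sq_sub_add_one] at hlo
    rw [huniq i ⟨hlo, hhi⟩]

/-- For every positive integer `n` there is a unique positive integer `k` with
`k^2 - k + 1 ≤ n ≤ k^2 + k`; for this `k`, if `n ≤ k^2` then the minimum weight
`φ(n)` of a staircase representation of `n` equals `2k` (every representation has
weight at least `2k` and some representation has weight exactly `2k`), while if
`n ≥ k^2 + 1` then `φ(n) = 2k + 1` (every representation has weight at least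
`2k + 1` and some representation has weight exactly `2k + 1`). -/
theorem stmt19 (n : ℕ) (hn : 0 < n) :
    (∃! k : ℕ, 0 < k ∧ k ^ 2 - k + 1 ≤ n ∧ n ≤ k ^ 2 + k) ∧
    (∀ k : ℕ, 0 < k → k ^ 2 - k + 1 ≤ n → n ≤ k ^ 2 + k →
      (n ≤ k ^ 2 →
        (∀ w : ℕ, IsStaircaseWeight n w → 2 * k ≤ w) ∧ IsStaircaseWeight n (2 * k)) ∧
      (k ^ 2 + 1 ≤ n →
        (∀ w : ℕ, IsStaircaseWeight n w → 2 * k + 1 ≤ w) ∧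
          IsStaircaseWeight n (2 * k + 1))) := by
  refine ⟨existsUnique_sq_sub_add_one_le_and_le_sq_add hn,
    fun k hk hlo hhi => ⟨fun hle => ?_, fun hlt => ?_⟩⟩
  · obtain ⟨j, rfl⟩ := Nat.exists_eq_add_one_of_ne_zero hk.ne'
    rw [add_one_sq_sub_add_one] at hlo
    obtain ⟨hmem, hmin⟩ : IsLeast {w | IsStaircaseWeight n w} (2 * j + 1 + 1) :=
      isLeast_isStaircaseWeight (by linarith) (by linarith)
    exact ⟨fun w hw => hmin hw, hmem⟩
  · obtain ⟨hmem, hmin⟩ : IsLeast {w | IsStaircaseWeight n w} (2 * k + 1) :=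
      isLeast_isStaircaseWeight (by linarith) (by linarith)
    exact ⟨fun w hw => hmin hw, hmem⟩
end
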